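/- Let p be a prime, q = 1/p, let μ ≥ 1 be an integer, and let n ≥ 1 be an odd integer. Then (1 − q^n)·P(n−1, p^μ) = P(n, p^μ) − q^n·P(n, p^{μ−1}). (When μ = 1 the last term vanishes automatically, since P(n, p^0) = P(n, 1) = 0.) -/

import Mathlib

/-- Number of symmetric `n × n` matrices over `ZMod m` with nonzero determinant. -/
noncomputable def Nsym (n m : ℕ) : ℕ :=
  Nat.card {A : Matrix (Fin n) (Fin n) (ZMod m) // A.IsSymm ∧ A.det ≠ 0}

/-- Proportion of symmetric `n × n` matrices over `ZMod m` with nonzero determinant. -/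
noncomputable def Psym (n m : ℕ) : ℝ :=
  (Nsym n m : ℝ) / (m : ℝ) ^ (n * (n + 1) / 2)

/-!
Let `𝔪` be the maximal ideal of a finite local ring and `q` the inverse of the number of residue
classes. Take a random symmetric matrix some of whose rows have entries in `𝔪`, and eliminate with
another row: its diagonal entry is a unit, or only some off-diagonal entry is and a `2 × 2` block
can be split off, or the row joins those with entries in `𝔪`. The resulting recursion is solved by
the distribution `corankProb q n k` of the corank modulo `𝔪`. What is left in corank `k` over
`ℤ / p ^ μ` is `p` times a uniform symmetric `k × k` matrix, whence
`P(n, p ^ μ) = ∑ k, corankProb q n k * P(k, p ^ (μ - k))`. For odd `n` the probabilities of the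
coranks `2 * j` and `2 * j + 1` are `1 - q ^ (2 * j + 1)` and `q ^ (2 * j + 1)` times a common
factor, so the claim for sizes `2 * j + 1` and smaller exponents collapses each such pair into one
term; comparing with the expansion in size `n - 1` gives the claim for `n` and `μ`.
-/

section CorankDistribution

variable {K : Type*} [CommRing K] (q : K)

/-- The Gaussian binomial coefficient, defined by its Pascal rule. -/
def gaussBinom : ℕ → ℕ → K
  | _, 0 => 1
  | 0, _ + 1 => 0
  | n + 1, k + 1 => gaussBinom n k + q ^ (k + 1) * gaussBinom n (k + 1)

theorem gaussBinom_zero_right (n : ℕ) : gaussBinom q n 0 = 1 := by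
  cases n <;> rfl

theorem gaussBinom_succ_succ (n k : ℕ) :
    gaussBinom q (n + 1) (k + 1) = gaussBinom q n k + q ^ (k + 1) * gaussBinom q n (k + 1) :=
  rfl

theorem gaussBinom_eq_zero_of_lt {n k : ℕ} (h : n < k) : gaussBinom q n k = 0 := by
  induction n generalizing k with
  | zero => obtain ⟨k, rfl⟩ := Nat.exists_eq_succ_of_ne_zero h.ne'; rfl
  | succ n ih =>
    obtain ⟨k, rfl⟩ := Nat.exists_eq_succ_of_ne_zero (Nat.ne_zero_of_lt h)
    rw [gaussBinom_succ_succ, ih (by omega), ih (by omega), mul_zero, add_zero]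

theorem one_sub_pow_mul_gaussBinom_succ_right (k d : ℕ) :
    (1 - q ^ (k + 1)) * gaussBinom q (k + d) (k + 1) = (1 - q ^ d) * gaussBinom q (k + d) k := by
  induction d generalizing k with
  | zero => simp [gaussBinom_eq_zero_of_lt q k.lt_succ_self]
  | succ d ihd =>
    induction k with
    | zero =>
      have h := ihd 0
      simp only [zero_add, gaussBinom_zero_right, gaussBinom_succ_succ] at h ⊢
      linear_combination q * h
    | succ k ihk =>
      have h := ihd (k + 1)
      rw [show k + (d + 1) = k + 1 + d by ring] at ihk
      rw [show k + 1 + (d + 1) = k + 1 + d + 1 by ring]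
      simp only [gaussBinom_succ_succ _ (k + 1 + d)]
      linear_combination q ^ (k + 2) * h + ihk

theorem one_sub_pow_mul_gaussBinom_succ_left (k d : ℕ) :
    (1 - q ^ (k + d + 1)) * gaussBinom q (k + d) (k + 1) =
      (1 - q ^ d) * gaussBinom q (k + d + 1) (k + 1) := by
  rw [gaussBinom_succ_succ]
  linear_combination one_sub_pow_mul_gaussBinom_succ_right q k d

/-- `∏ (1 - q ^ i)` over odd `i ≤ d`: for a field with `1 / q` elements, the proportion of
invertible matrices among the symmetric `d × d` matrices. -/
def oddPochhammer (d : ℕ) : K := ∏ i ∈ Finset.range ((d + 1) / 2), (1 - q ^ (2 * i + 1))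

theorem oddPochhammer_odd (h : ℕ) :
    oddPochhammer q (2 * h + 1) = (1 - q ^ (2 * h + 1)) * oddPochhammer q (2 * h) := by
  rw [oddPochhammer, oddPochhammer, show (2 * h + 1 + 1) / 2 = h + 1 by omega,
    show (2 * h + 1) / 2 = h by omega, Finset.prod_range_succ, mul_comm]

theorem oddPochhammer_even (h : ℕ) :
    oddPochhammer q (2 * h + 2) = oddPochhammer q (2 * h + 1) := by
  rw [oddPochhammer, oddPochhammer, show (2 * h + 2 + 1) / 2 = (2 * h + 1 + 1) / 2 by omega]

theorem oddPochhammer_succ (d : ℕ) :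
    oddPochhammer q (d + 1) =
      (1 - q) * oddPochhammer q d + q * (1 - q ^ d) * oddPochhammer q (d - 1) := by
  obtain ⟨h, rfl | rfl⟩ := d.even_or_odd'
  · rcases h with _ | h
    · simp [oddPochhammer]
    · rw [oddPochhammer_odd, show 2 * (h + 1) = 2 * h + 2 by ring, oddPochhammer_even,
        show 2 * h + 2 - 1 = 2 * h + 1 from rfl]
      ring
  · rw [oddPochhammer_even, oddPochhammer_odd, Nat.add_sub_cancel]
    ring

/-- For a field with `1 / q` elements, the proportion of matrices of corank `k` among the symmetric
`n × n` matrices: the kernel is a `k`-dimensional subspace, and the form induced on the quotient by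
it is nondegenerate. It vanishes for `n < k`, where the exponent `n - k` is truncated, because the
Gaussian binomial coefficient does. -/
def corankProb (n k : ℕ) : K :=
  q ^ (k * (k + 1) / 2) * gaussBinom q n k * oddPochhammer q (n - k)

theorem corankProb_eq_zero_of_lt {n k : ℕ} (h : n < k) : corankProb q n k = 0 := by
  rw [corankProb, gaussBinom_eq_zero_of_lt q h, mul_zero, zero_mul]

theorem corankProb_zero_right (n : ℕ) : corankProb q n 0 = oddPochhammer q n := by
  simp [corankProb, gaussBinom_zero_right]

theorem pow_triangle_succ (k : ℕ) :
    q ^ ((k + 1) * (k + 1 + 1) / 2) = q ^ (k + 1) * q ^ (k * (k + 1) / 2) := by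
  rw [← pow_add, show (k + 1) * (k + 1 + 1) = k * (k + 1) + (k + 1) * 2 by ring,
    Nat.add_mul_div_right _ _ two_pos, add_comm]

theorem corankProb_succ_zero (m : ℕ) :
    corankProb q (m + 1) 0 =
      (1 - q) * corankProb q m 0 + q * (1 - q ^ m) * corankProb q (m - 1) 0 := by
  simp only [corankProb_zero_right, oddPochhammer_succ]

theorem corankProb_succ_succ (m i : ℕ) :
    corankProb q (m + 1) (i + 1) =
      (1 - q) * corankProb q m (i + 1) + q * (1 - q ^ m) * corankProb q (m - 1) (i + 1)
        + q ^ (m + 1) * corankProb q m i := by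
  rcases lt_trichotomy m i with h | rfl | h
  · simp only [corankProb_eq_zero_of_lt q (show m + 1 < i + 1 by omega),
      corankProb_eq_zero_of_lt q (show m < i + 1 by omega),
      corankProb_eq_zero_of_lt q (show m - 1 < i + 1 by omega), corankProb_eq_zero_of_lt q h]
    ring
  · rw [corankProb_eq_zero_of_lt q (show m < m + 1 by omega),
      corankProb_eq_zero_of_lt q (show m - 1 < m + 1 by omega)]
    simp only [corankProb, gaussBinom_succ_succ, gaussBinom_eq_zero_of_lt q m.lt_succ_self,
      pow_triangle_succ, Nat.sub_self]
    ring
  · obtain ⟨e, rfl⟩ := Nat.exists_eq_add_of_lt h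
    have absorb_right := one_sub_pow_mul_gaussBinom_succ_right q i (e + 1)
    have absorb_left := one_sub_pow_mul_gaussBinom_succ_left q i e
    have odd := oddPochhammer_succ q e
    simp only [corankProb, pow_triangle_succ, gaussBinom_succ_succ _ (i + e + 1),
      show i + e + 1 + 1 - (i + 1) = e + 1 by omega, show i + e + 1 - (i + 1) = e by omega,
      show i + e + 1 - 1 = i + e by omega, show i + e - (i + 1) = e - 1 by omega,
      show i + e + 1 - i = e + 1 by omega]
    rw [← add_assoc] at absorb_right
    linear_combination q ^ (i + 1) * q ^ (i * (i + 1) / 2) *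
      (gaussBinom q (i + e + 1) (i + 1) * odd - oddPochhammer q (e + 1) * absorb_right
        - q * oddPochhammer q (e - 1) * absorb_left)

theorem eq_sum_corankProb_of_recursion {F : ℕ → ℕ → K}
    (hF : ∀ m k, F (m + 1) k =
      (1 - q) * F m k + q * (1 - q ^ m) * F (m - 1) k + q ^ (m + 1) * F m (k + 1))
    {m N : ℕ} (hN : m < N) (k : ℕ) :
    F m k = ∑ i ∈ Finset.range N, corankProb q m i * F 0 (k + i) := by
  induction m using Nat.strong_induction_on generalizing N k with
  | _ m ih =>
  obtain ⟨N, rfl⟩ := Nat.exists_eq_succ_of_ne_zero (Nat.ne_zero_of_lt hN)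
  rw [Nat.succ_eq_add_one]
  rcases m with _ | m
  · rw [Finset.sum_range_succ', Finset.sum_eq_zero fun i _ => by
      rw [corankProb_eq_zero_of_lt q i.succ_pos, zero_mul]]
    simp [corankProb_zero_right, oddPochhammer]
  · rw [hF, ih m (by omega) (show m < N + 1 by omega), ih (m - 1) (by omega)
      (show m - 1 < N + 1 by omega), ih m (by omega) (show m < N by omega) (k + 1)]
    simp only [Finset.sum_range_succ' _ N, corankProb_succ_succ, corankProb_succ_zero, add_mul,
      Finset.sum_add_distrib, mul_add, Finset.mul_sum, mul_assoc, add_assoc, add_left_comm k,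
      add_comm 1]
    ring

/-- The common factor of the proportions of the coranks `2 * j` and `2 * j + 1` in the odd size
`2 * h + 1`, by which the two coranks can be treated together. -/
def corankPairFactor (h j : ℕ) : K :=
  q ^ (2 * j * (2 * j + 1) / 2) * gaussBinom q (2 * h + 1) (2 * j + 1) *
    oddPochhammer q (2 * (h - j))

theorem corankProb_odd_even {h j : ℕ} (hj : j ≤ h) :
    corankProb q (2 * h + 1) (2 * j) = (1 - q ^ (2 * j + 1)) * corankPairFactor q h j := by
  obtain ⟨d, rfl⟩ := Nat.exists_eq_add_of_le hj
  have absorb := one_sub_pow_mul_gaussBinom_succ_right q (2 * j) (2 * d + 1)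
  rw [← add_assoc, ← mul_add] at absorb
  rw [corankProb, corankPairFactor, show 2 * (j + d) + 1 - 2 * j = 2 * d + 1 by omega,
    Nat.add_sub_cancel_left, oddPochhammer_odd]
  linear_combination -q ^ (2 * j * (2 * j + 1) / 2) * oddPochhammer q (2 * d) * absorb

theorem corankProb_odd_odd (h j : ℕ) :
    corankProb q (2 * h + 1) (2 * j + 1) = q ^ (2 * j + 1) * corankPairFactor q h j := by
  rw [corankProb, corankPairFactor, pow_triangle_succ,
    show 2 * h + 1 - (2 * j + 1) = 2 * (h - j) by omega]
  ring

theorem one_sub_pow_mul_corankProb_even_even {h j : ℕ} (hj : j ≤ h) :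
    (1 - q ^ (2 * h + 1)) * corankProb q (2 * h) (2 * j) = corankProb q (2 * h + 1) (2 * j) := by
  rw [corankProb_odd_even q hj]
  obtain ⟨d, rfl⟩ := Nat.exists_eq_add_of_le hj
  have absorb := one_sub_pow_mul_gaussBinom_succ_right q (2 * j) (2 * d)
  rw [← mul_add] at absorb
  rw [corankProb, corankPairFactor, ← Nat.mul_sub, Nat.add_sub_cancel_left, gaussBinom_succ_succ]
  linear_combination -(q ^ (2 * j * (2 * j + 1) / 2) * oddPochhammer q (2 * d) *
    q ^ (2 * j + 1)) * absorb

theorem one_sub_pow_mul_corankProb_even_odd {h j : ℕ} (hj : j ≤ h) :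
    (1 - q ^ (2 * h + 1)) * corankProb q (2 * h) (2 * j + 1) =
      corankProb q (2 * h + 1) (2 * j + 1) - q ^ (2 * h + 1) * corankPairFactor q h j := by
  rw [corankProb_odd_odd]
  obtain ⟨d, rfl⟩ := Nat.exists_eq_add_of_le hj
  have absorb := one_sub_pow_mul_gaussBinom_succ_left q (2 * j) (2 * d)
  rw [← mul_add] at absorb
  rw [corankProb, corankPairFactor, pow_triangle_succ, Nat.add_sub_cancel_left,
    show 2 * (j + d) - (2 * j + 1) = 2 * d - 1 by omega]
  rcases d with _ | d
  · simp [gaussBinom_eq_zero_of_lt]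
  · rw [show 2 * (d + 1) = 2 * d + 2 by ring] at absorb ⊢
    rw [oddPochhammer_even, show 2 * d + 2 - 1 = 2 * d + 1 from rfl]
    linear_combination q ^ (2 * j + 1) * q ^ (2 * j * (2 * j + 1) / 2) *
      oddPochhammer q (2 * d + 1) * absorb

theorem sum_range_two_mul {M : Type*} [AddCommMonoid M] (f : ℕ → M) (n : ℕ) :
    ∑ k ∈ Finset.range (2 * n), f k = ∑ j ∈ Finset.range n, (f (2 * j) + f (2 * j + 1)) := by
  induction n with
  | zero => rfl
  | succ n ih => rw [mul_add_one, Finset.sum_range_succ, Finset.sum_range_succ, ih,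
      Finset.sum_range_succ, add_assoc]

theorem sum_corankProb_odd (f : ℕ → K) (h : ℕ) :
    ∑ k ∈ Finset.range (2 * (h + 1)), corankProb q (2 * h + 1) k * f k =
      ∑ j ∈ Finset.range (h + 1), corankPairFactor q h j *
        ((1 - q ^ (2 * j + 1)) * f (2 * j) + q ^ (2 * j + 1) * f (2 * j + 1)) := by
  rw [sum_range_two_mul]
  refine Finset.sum_congr rfl fun j hj => ?_
  rw [corankProb_odd_even q (Finset.mem_range_succ_iff.1 hj), corankProb_odd_odd]
  ring

theorem one_sub_pow_mul_sum_corankProb_even (f : ℕ → K) (h : ℕ) :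
    (1 - q ^ (2 * h + 1)) * ∑ k ∈ Finset.range (2 * (h + 1)), corankProb q (2 * h) k * f k =
      ∑ k ∈ Finset.range (2 * (h + 1)), corankProb q (2 * h + 1) k * f k -
        q ^ (2 * h + 1) * ∑ j ∈ Finset.range (h + 1), corankPairFactor q h j * f (2 * j + 1) := by
  rw [sum_range_two_mul, sum_range_two_mul, Finset.mul_sum, Finset.mul_sum,
    ← Finset.sum_sub_distrib]
  refine Finset.sum_congr rfl fun j hj => ?_
  have hj := Finset.mem_range_succ_iff.1 hj
  linear_combination f (2 * j) * one_sub_pow_mul_corankProb_even_even q hj +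
    f (2 * j + 1) * one_sub_pow_mul_corankProb_even_odd q hj

theorem one_sub_pow_mul_even_of_corank_expansion {Z : ℕ → ℕ → K} (hZ_zero : ∀ n, Z n 0 = 0)
    (hZ : ∀ n μ N, n < N → Z n μ = ∑ k ∈ Finset.range N, corankProb q n k * Z k (μ - k))
    (h μ : ℕ) :
    (1 - q ^ (2 * h + 1)) * Z (2 * h) μ =
      Z (2 * h + 1) μ - q ^ (2 * h + 1) * Z (2 * h + 1) (μ - 1) := by
  induction μ using Nat.strong_induction_on generalizing h with
  | _ μ ih =>
  rcases μ with _ | μ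
  · simp only [hZ_zero, mul_zero, sub_zero]
  have odd_expansion : Z (2 * h + 1) μ =
      ∑ j ∈ Finset.range (h + 1), corankPairFactor q h j * Z (2 * j + 1) (μ - 2 * j) := by
    rw [hZ _ μ (2 * (h + 1)) (by omega), sum_corankProb_odd q fun k => Z k (μ - k)]
    refine Finset.sum_congr rfl fun j _ => ?_
    rw [ih (μ - 2 * j) (by omega), Nat.sub_sub]
    ring
  rw [hZ (2 * h) (μ + 1) (2 * (h + 1)) (by omega),
    one_sub_pow_mul_sum_corankProb_even q fun k => Z k (μ + 1 - k),
    ← hZ (2 * h + 1) (μ + 1) (2 * (h + 1)) (by omega), Nat.add_sub_cancel, odd_expansion]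
  simp only [Nat.add_sub_add_right]

end CorankDistribution

section Expectation

open scoped BigOperators

theorem expect_eq_of_forall_sdiff {α : Type*} {A B : Finset α} (hAB : A ⊆ B) (hA : A.Nonempty)
    {f : α → ℝ} {c r : ℝ} (hr : (A.card : ℝ) = r * B.card) (hf : ∀ x ∈ B, x ∉ A → f x = c) :
    𝔼 x ∈ B, f x = (1 - r) * c + r * 𝔼 x ∈ A, f x := by
  classical
  have hB : (B.card : ℝ) ≠ 0 := by exact_mod_cast (hA.mono hAB).card_pos.ne'
  have sum_sdiff : ∑ x ∈ B \ A, f x = (B.card - A.card) * c := by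
    rw [Finset.sum_eq_card_nsmul fun x hx => hf x (Finset.mem_sdiff.1 hx).1
      (Finset.mem_sdiff.1 hx).2, nsmul_eq_mul, Finset.card_sdiff_of_subset hAB,
      Nat.cast_sub (Finset.card_le_card hAB)]
  have sum_split := Finset.sum_sdiff (f := f) hAB
  rw [sum_sdiff, ← Finset.card_mul_expect A f, ← Finset.card_mul_expect B f, hr] at sum_split
  refine mul_left_cancel₀ hB ?_
  linear_combination -sum_split

theorem expect_image_addMonoidHom {G H : Type*} [AddGroup G] [AddGroup H] [Fintype G]
    [DecidableEq H] (φ : G →+ H) (f : H → ℝ) :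
    𝔼 y ∈ Finset.univ.image φ, f y = 𝔼 x, f (φ x) := by
  have card_fiber {y : H} (hy : y ∈ Finset.univ.image φ) :
      (Finset.univ.filter fun x => φ x = y).card = (Finset.univ.filter fun x => φ x = 0).card :=
    AddMonoidHom.card_fiber_eq_of_mem_range φ (by simpa using hy) ⟨0, map_zero φ⟩
  have card_ker_ne_zero : ((Finset.univ.filter fun x => φ x = 0).card : ℝ) ≠ 0 :=
    Nat.cast_ne_zero.2 (Finset.card_ne_zero_of_mem (a := 0) (by simp))
  rw [Finset.expect_eq_sum_div_card, Finset.expect_eq_sum_div_card, Finset.sum_comp f φ,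
    Finset.card_eq_sum_card_image φ, Finset.sum_congr rfl fun y hy => card_fiber hy,
    Finset.sum_congr rfl fun y hy => congrArg (· • f y) (card_fiber hy), ← Finset.smul_sum,
    Finset.sum_const, nsmul_eq_mul, smul_eq_mul, Nat.cast_mul, mul_comm (Nat.cast _) (∑ _ ∈ _, _),
    mul_div_mul_right _ _ card_ker_ne_zero]

end Expectation

section Counting

open Matrix
open scoped BigOperators

theorem ncard_compl_insert {α : Type*} {s : Set α} {a : α} (ha : a ∉ s) :
    (insert a s)ᶜ.ncard = sᶜ.ncard - 1 := by
  rw [Set.insert_eq, Set.compl_union, Set.inter_comm, ← Set.sdiff_eq,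
    Set.ncard_sdiff_singleton_of_mem ha]

theorem card_ideal_eq_inv_mul_card {R : Type*} [CommRing R] [Finite R] (I : Ideal R) :
    (Nat.card I : ℝ) = (Nat.card (R ⧸ I) : ℝ)⁻¹ * Nat.card R := by
  have : Finite (R ⧸ I) := Finite.of_surjective _ Ideal.Quotient.mk_surjective
  have card_quotient_ne_zero : (Nat.card (R ⧸ I) : ℝ) ≠ 0 := Nat.cast_ne_zero.2 Nat.card_pos.ne'
  rw [Submodule.card_eq_card_quotient_mul_card I, Nat.cast_mul, mul_comm (Nat.card I : ℝ),
    inv_mul_cancel_left₀ card_quotient_ne_zero]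

variable {R : Type*} {ι κ : Type*}

/-- The symmetric matrix with first row `x` and remaining block `D`. -/
def bordered (x : Unit ⊕ κ → R) (D : Matrix κ κ R) : Matrix (Unit ⊕ κ) (Unit ⊕ κ) R :=
  fromBlocks (of fun _ _ => x (Sum.inl ())) (of fun _ j => x (Sum.inr j))
    (of fun i _ => x (Sum.inr i)) D

theorem bordered_submatrix (e : ι ≃ κ) (x : Unit ⊕ κ → R) (D : Matrix κ κ R) :
    (bordered x D).submatrix (Equiv.sumCongr (Equiv.refl _) e)
      (Equiv.sumCongr (Equiv.refl _) e) =
        bordered (x ∘ Equiv.sumCongr (Equiv.refl _) e) (D.submatrix e e) := by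
  ext (i | i) (j | j) <;> rfl

theorem bordered_toBlocks₂₂ {M : Matrix (Unit ⊕ κ) (Unit ⊕ κ) R} (hM : M.IsSymm) :
    bordered (M (Sum.inl ())) M.toBlocks₂₂ = M := by
  ext (i | i) (j | j)
  · rfl
  · rfl
  · exact hM.apply _ _
  · rfl

variable [CommRing R] [Fintype R] [Fintype ι] [DecidableEq ι] [Fintype κ] [DecidableEq κ]
  (I : Ideal R)

open Classical in
/-- The symmetric matrices whose rows, and hence columns, indexed by `s` have entries in `I`. -/
noncomputable def symmRowsIn (s : Set ι) : Finset (Matrix ι ι R) :=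
  {M | M.IsSymm ∧ ∀ i ∈ s, ∀ j, M i j ∈ I}

open Classical in
/-- The vectors whose coordinates indexed by `s` lie in `I`. -/
noncomputable def coordsIn (s : Set ι) : Finset (ι → R) := {x | ∀ i ∈ s, x i ∈ I}

variable {I}

theorem mem_symmRowsIn {s : Set ι} {M : Matrix ι ι R} :
    M ∈ symmRowsIn I s ↔ M.IsSymm ∧ ∀ i ∈ s, ∀ j, M i j ∈ I := by
  simp [symmRowsIn]

theorem mem_coordsIn {s : Set ι} {x : ι → R} : x ∈ coordsIn I s ↔ ∀ i ∈ s, x i ∈ I := by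
  simp [coordsIn]

theorem coordsIn_nonempty (s : Set ι) : (coordsIn I s).Nonempty :=
  ⟨0, mem_coordsIn.2 fun _ _ => I.zero_mem⟩

theorem coordsIn_anti {s t : Set ι} (h : s ⊆ t) : coordsIn I t ⊆ coordsIn I s := fun _ hx =>
  mem_coordsIn.2 fun i hi => mem_coordsIn.1 hx i (h hi)

variable (I) in
theorem card_coordsIn (s : Set ι) :
    ((coordsIn I s).card : ℝ) =
      (Nat.card (R ⧸ I) : ℝ)⁻¹ ^ s.ncard * (Nat.card R : ℝ) ^ Fintype.card ι := by
  classical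
  have coordsIn_eq : coordsIn I s =
      Fintype.piFinset fun i => if i ∈ s then Finset.univ.filter (· ∈ I) else Finset.univ := by
    ext x
    rw [mem_coordsIn, Fintype.mem_piFinset]
    refine forall_congr' fun i => ?_
    split_ifs with hi <;> simp [hi]
  have card_factor (i : ι) :
      ((if i ∈ s then Finset.univ.filter (· ∈ I) else Finset.univ : Finset R).card : ℝ) =
        (if i ∈ s then (Nat.card (R ⧸ I) : ℝ)⁻¹ else 1) * Nat.card R := by
    split_ifs
    · rw [← card_ideal_eq_inv_mul_card, ← Fintype.card_subtype, Nat.card_eq_fintype_card]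
    · rw [one_mul, Finset.card_univ, Nat.card_eq_fintype_card]
  rw [coordsIn_eq, Fintype.card_piFinset, Nat.cast_prod]
  simp only [card_factor, Finset.prod_mul_distrib, Finset.prod_ite, Finset.prod_const, one_pow,
    mul_one, Finset.card_univ, Set.ncard_eq_toFinset_card', Set.filter_mem_univ_eq_toFinset]

variable (I) in
theorem card_coordsIn_of_subset {s t : Set ι} (h : s ⊆ t) :
    ((coordsIn I t).card : ℝ) = (Nat.card (R ⧸ I) : ℝ)⁻¹ ^ (t \ s).ncard * (coordsIn I s).card := by
  rw [card_coordsIn, card_coordsIn, ← mul_assoc, ← pow_add, Set.ncard_sdiff_add_ncard_of_subset h]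

theorem expect_coordsIn_eq {s : Set ι} {i : ι} (hi : i ∉ s) {q : ℝ}
    (hq : q = (Nat.card (R ⧸ I) : ℝ)⁻¹) {m : ℕ} (hm : sᶜ.ncard = m + 1) {f : (ι → R) → ℝ} {a b : ℝ}
    (ha : ∀ x ∈ coordsIn I s, x ∉ coordsIn I (insert i s) → f x = a)
    (hb : ∀ x ∈ coordsIn I (insert i s), x ∉ coordsIn I Set.univ → f x = b) :
    𝔼 x ∈ coordsIn I s, f x =
      (1 - q) * a + q * (1 - q ^ m) * b + q ^ (m + 1) * 𝔼 x ∈ coordsIn I Set.univ, f x := by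
  have card_insert : ((coordsIn I (insert i s)).card : ℝ) = q * (coordsIn I s).card := by
    rw [card_coordsIn_of_subset I (Set.subset_insert i s), Set.insert_sdiff_eq_singleton hi,
      Set.ncard_singleton, pow_one, hq]
  have card_univ : ((coordsIn I (Set.univ : Set ι)).card : ℝ) =
      q ^ m * (coordsIn I (insert i s)).card := by
    rw [card_coordsIn_of_subset I (Set.subset_univ (insert i s)), ← Set.compl_eq_univ_sdiff,
      ncard_compl_insert hi, hm, Nat.add_sub_cancel, hq]
  rw [expect_eq_of_forall_sdiff (coordsIn_anti (Set.subset_insert i s)) (coordsIn_nonempty _)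
    card_insert ha, expect_eq_of_forall_sdiff (coordsIn_anti (Set.subset_univ _))
    (coordsIn_nonempty _) card_univ hb]
  ring

theorem bordered_mem_symmRowsIn {t : Set (Unit ⊕ κ)} {x : Unit ⊕ κ → R} {D : Matrix κ κ R} :
    bordered x D ∈ symmRowsIn I t ↔
      x ∈ coordsIn I {j | Sum.inl () ∈ t ∨ j ∈ t} ∧ D ∈ symmRowsIn I (Sum.inr ⁻¹' t) := by
  simp only [mem_symmRowsIn, mem_coordsIn, IsSymm.ext_iff, bordered, Sum.forall, fromBlocks_apply₁₁,
    fromBlocks_apply₁₂, fromBlocks_apply₂₁, fromBlocks_apply₂₂, of_apply, Set.mem_ofPred_eq,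
    Set.mem_preimage, Unique.forall_iff, PUnit.default_eq_unit, true_and, or_self]
  grind

theorem expect_symmRowsIn_unit_sum (t : Set (Unit ⊕ κ)) (f : Matrix (Unit ⊕ κ) (Unit ⊕ κ) R → ℝ) :
    𝔼 M ∈ symmRowsIn I t, f M = 𝔼 x ∈ coordsIn I {j | Sum.inl () ∈ t ∨ j ∈ t},
      𝔼 D ∈ symmRowsIn I (Sum.inr ⁻¹' t), f (bordered x D) := by
  rw [← Finset.expect_product']
  refine Finset.expect_nbij' (fun M => (M (Sum.inl ()), M.toBlocks₂₂)) (fun y => bordered y.1 y.2)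
    (fun M hM => ?_) (fun y hy => ?_) (fun M hM => ?_) (fun y _ => ?_) fun M hM => ?_
  · rw [← bordered_toBlocks₂₂ (mem_symmRowsIn.1 hM).1, bordered_mem_symmRowsIn] at hM
    exact Finset.mem_product.2 hM
  · exact bordered_mem_symmRowsIn.2 (Finset.mem_product.1 hy)
  · exact bordered_toBlocks₂₂ (mem_symmRowsIn.1 hM).1
  · refine Prod.ext ?_ rfl
    ext (i | i) <;> rfl
  · rw [bordered_toBlocks₂₂ (mem_symmRowsIn.1 hM).1]

theorem expect_symmRowsIn_preimage (e : ι ≃ κ) (s : Set κ) (f : Matrix ι ι R → ℝ) :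
    𝔼 M ∈ symmRowsIn I (e ⁻¹' s), f M = 𝔼 M ∈ symmRowsIn I s, f (M.submatrix e e) := by
  refine (Finset.expect_equiv (reindex e.symm e.symm) (fun M => ?_) fun M _ => rfl).symm
  simp only [mem_symmRowsIn, IsSymm.ext_iff, reindex_apply, Equiv.symm_symm, submatrix_apply,
    Set.mem_preimage]
  refine and_congr ?_ ?_ <;>
  · rw [← e.forall_congr_right]
    exact forall_congr' fun i => by rw [← e.forall_congr_right]

theorem sub_mem_symmRowsIn_iff {s : Set ι} {D X : Matrix ι ι R} (hX : X ∈ symmRowsIn I s) :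
    D - X ∈ symmRowsIn I s ↔ D ∈ symmRowsIn I s := by
  simp only [mem_symmRowsIn] at hX ⊢
  refine ⟨fun h => ?_, fun h => ⟨h.1.sub hX.1, fun i hi j => I.sub_mem (h.2 i hi j) (hX.2 i hi j)⟩⟩
  rw [← sub_add_cancel D X]
  exact ⟨h.1.add hX.1, fun i hi j => I.add_mem (h.2 i hi j) (hX.2 i hi j)⟩

variable (I) in
/-- The mean of `g (det M)` for `M` ranging over `symmRowsIn I s`. -/
noncomputable def expectDet (g : R → ℝ) (s : Set ι) : ℝ := 𝔼 M ∈ symmRowsIn I s, g M.det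

theorem expectDet_eq_of_ncard_eq (g : R → ℝ) {s : Set ι} {t : Set κ} (h : s.ncard = t.ncard)
    (hc : sᶜ.ncard = tᶜ.ncard) : expectDet I g s = expectDet I g t := by
  classical
  obtain ⟨e⟩ : Nonempty (s ≃ t) := Finite.card_eq.1 h
  obtain ⟨ec⟩ : Nonempty (↥sᶜ ≃ ↥tᶜ) := Finite.card_eq.1 hc
  let σ : ι ≃ κ := (Equiv.Set.sumCompl s).symm.trans
    ((e.sumCongr ec).trans (Equiv.Set.sumCompl t))
  have preimage_eq : σ ⁻¹' t = s := by
    ext i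
    obtain ⟨a | a, rfl⟩ := (Equiv.Set.sumCompl s).surjective i
    · have σ_apply : σ (Equiv.Set.sumCompl s (Sum.inl a)) = e a := by simp [σ]
      exact iff_of_true (Set.mem_preimage.2 (σ_apply ▸ (e a).2)) a.2
    · have σ_apply : σ (Equiv.Set.sumCompl s (Sum.inr a)) = ec a := by simp [σ]
      exact iff_of_false (fun h => (ec a).2 (σ_apply ▸ h)) a.2
  rw [expectDet, ← preimage_eq, expect_symmRowsIn_preimage]
  simp only [det_submatrix_equiv_self, expectDet]

section Elimination

variable {g : R → ℝ} (hg : ∀ u y, IsUnit u → g (u * y) = g y)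
include hg

/-- Subtracting the Schur correction `Bᵀ A⁻¹ B` permutes `symmRowsIn I s`. -/
theorem expect_det_fromBlocks_of_isUnit {α : Type*} [Fintype α] [DecidableEq α]
    {A : Matrix α α R} (hA : A.IsSymm) (hu : IsUnit A.det) {s : Set κ} {B : Matrix α κ R}
    (hB : ∀ i, B i ∈ coordsIn I s) :
    𝔼 D ∈ symmRowsIn I s, g (fromBlocks A B Bᵀ D).det = expectDet I g s := by
  have inv_symm : A⁻¹.IsSymm := by rw [IsSymm, transpose_nonsing_inv, hA]
  have correction_mem : Bᵀ * A⁻¹ * B ∈ symmRowsIn I s := by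
    refine mem_symmRowsIn.2 ⟨?_, fun i hi j => ?_⟩
    · rw [IsSymm, transpose_mul, transpose_mul, transpose_transpose, inv_symm.eq, Matrix.mul_assoc]
    · rw [Matrix.mul_assoc, mul_apply]
      exact I.sum_mem fun a _ => I.mul_mem_right _ (mem_coordsIn.1 (hB a) i hi)
  let _ := invertibleOfIsUnitDet A hu
  refine Finset.expect_equiv (Equiv.subRight (Bᵀ * A⁻¹ * B))
    (fun D => (sub_mem_symmRowsIn_iff correction_mem).symm) fun D _ => ?_
  rw [det_fromBlocks₁₁, invOf_eq_nonsing_inv, hg _ _ hu, Equiv.subRight_apply]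

theorem expect_det_bordered_of_isUnit {s : Set κ} {x : Unit ⊕ κ → R} (hx : IsUnit (x (Sum.inl ())))
    (hxs : x ∘ Sum.inr ∈ coordsIn I s) :
    𝔼 D ∈ symmRowsIn I s, g (bordered x D).det = expectDet I g s :=
  expect_det_fromBlocks_of_isUnit hg (A := of fun _ _ => x (Sum.inl ())) rfl
    (by rwa [det_unique]) (B := of fun _ j => x (Sum.inr j)) fun _ => hxs

end Elimination

theorem expect_det_bordered_preimage (e : ι ≃ κ) (g : R → ℝ) (s : Set κ) (x : Unit ⊕ κ → R) :
    𝔼 D ∈ symmRowsIn I (e ⁻¹' s), g (bordered (x ∘ Equiv.sumCongr (Equiv.refl _) e) D).det =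
      𝔼 D ∈ symmRowsIn I s, g (bordered x D).det := by
  rw [expect_symmRowsIn_preimage]
  simp only [← bordered_submatrix, det_submatrix_equiv_self]

end Counting

section LocalRing

open Matrix IsLocalRing
open scoped BigOperators

theorem ncard_inr_preimage {κ : Type*} {t : Set (Unit ⊕ κ)} (ht : Sum.inl () ∉ t) :
    (Sum.inr ⁻¹' t).ncard = t.ncard := by
  refine Set.ncard_preimage_of_injective_subset_range Sum.inr_injective ?_
  rintro (_ | j) h
  exacts [absurd h ht, ⟨j, rfl⟩]

theorem ncard_compl_inr_preimage_add_one {κ : Type*} [Finite κ] {t : Set (Unit ⊕ κ)}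
    (ht : Sum.inl () ∉ t) : (Sum.inr ⁻¹' t)ᶜ.ncard + 1 = tᶜ.ncard := by
  have card_κ := Set.ncard_add_ncard_compl (Sum.inr ⁻¹' t)
  have card_sum := Set.ncard_add_ncard_compl t
  rw [Nat.card_sum, Nat.card_unique] at card_sum
  rw [ncard_inr_preimage ht] at card_κ
  omega

theorem isUnit_sub_of_mem_maximalIdeal {R : Type*} [CommRing R] [IsLocalRing R] {a u : R}
    (ha : a ∈ maximalIdeal R) (hu : IsUnit u) : IsUnit (a - u) := by
  by_contra h
  exact (mem_maximalIdeal u).1 ((Submodule.sub_mem_iff_right _ ha).1 h) hu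

theorem exists_equiv_unit_sum {κ : Type*} (j : κ) :
    ∃ e : Unit ⊕ {i // i ≠ j} ≃ κ, e (Sum.inl ()) = j := by
  classical
  exact ⟨((Equiv.sumComm _ _).trans (Equiv.optionEquivSumPUnit _).symm).trans
    (Equiv.optionSubtypeNe j), by simp⟩

variable {R : Type*} [CommRing R] [IsLocalRing R] [Fintype R]
  {κ : Type*} [Fintype κ] [DecidableEq κ] {g : R → ℝ} (hg : ∀ u y, IsUnit u → g (u * y) = g y)
include hg

/-- A nonunit diagonal entry next to a unit off-diagonal entry makes the leading `2 × 2` block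
invertible, whatever the second row. -/
theorem expect_det_bordered_of_isUnit_second {t : Set (Unit ⊕ κ)}
    {x : Unit ⊕ (Unit ⊕ κ) → R} (hx : x (Sum.inl ()) ∈ maximalIdeal R)
    (hu : IsUnit (x (Sum.inr (Sum.inl ())))) (hxt : x ∘ Sum.inr ∈ coordsIn (maximalIdeal R) t) :
    𝔼 D ∈ symmRowsIn (maximalIdeal R) t, g (bordered x D).det =
      expectDet (maximalIdeal R) g (Sum.inr ⁻¹' t) := by
  rw [expect_symmRowsIn_unit_sum]
  refine (Finset.expect_congr rfl fun y hy => ?_).trans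
    (Finset.expect_const (coordsIn_nonempty _) _)
  let A : Matrix (Unit ⊕ Unit) (Unit ⊕ Unit) R :=
    bordered (x ∘ Equiv.sumAssoc Unit Unit κ ∘ Sum.inl) (of fun _ _ => y (Sum.inl ()))
  let B : Matrix (Unit ⊕ Unit) κ R :=
    of (Sum.elim (fun _ => x ∘ Sum.inr ∘ Sum.inr) fun _ => y ∘ Sum.inr)
  have det_A : A.det = x (Sum.inl ()) * y (Sum.inl ()) -
      x (Sum.inr (Sum.inl ())) * x (Sum.inr (Sum.inl ())) := by
    rw [← det_submatrix_equiv_self (finSumFinEquiv.symm.trans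
      (Equiv.sumCongr finOneEquiv finOneEquiv) : Fin 2 ≃ Unit ⊕ Unit), det_fin_two]
    rfl
  have isUnit_det_A : IsUnit A.det :=
    det_A ▸ isUnit_sub_of_mem_maximalIdeal (Ideal.mul_mem_right _ _ hx) (hu.mul hu)
  have A_symm : A.IsSymm := by ext (i | i) (j | j) <;> rfl
  have B_mem (i) : B i ∈ coordsIn (maximalIdeal R) (Sum.inr ⁻¹' t) := by
    rw [mem_coordsIn] at hxt hy
    rcases i with i | i
    · exact mem_coordsIn.2 fun j hj => hxt _ hj
    · exact mem_coordsIn.2 fun j hj => hy _ (Or.inr hj)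
  rw [← expect_det_fromBlocks_of_isUnit hg A_symm isUnit_det_A B_mem]
  refine Finset.expect_congr rfl fun D _ => ?_
  rw [← det_submatrix_equiv_self (Equiv.sumAssoc Unit Unit κ)]
  congr 2
  ext ((i | i) | i) ((j | j) | j) <;> rfl

theorem expect_det_bordered_of_notMem {s : Set κ} {x : Unit ⊕ κ → R}
    (hx : x (Sum.inl ()) ∈ maximalIdeal R) (hxs : x ∘ Sum.inr ∈ coordsIn (maximalIdeal R) s) {j : κ}
    (hj : x (Sum.inr j) ∉ maximalIdeal R) {ι : Type*} [Fintype ι] [DecidableEq ι] {t : Set ι}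
    (ht : t.ncard = s.ncard) (htc : tᶜ.ncard = sᶜ.ncard - 1) :
    𝔼 D ∈ symmRowsIn (maximalIdeal R) s, g (bordered x D).det = expectDet (maximalIdeal R) g t := by
  have hjs : j ∉ s := fun h => hj (mem_coordsIn.1 hxs j h)
  obtain ⟨e, he⟩ := exists_equiv_unit_sum j
  have inl_notMem : Sum.inl () ∉ e ⁻¹' s := by rwa [Set.mem_preimage, he]
  have ncard_preimage (v : Set κ) : (e ⁻¹' v).ncard = v.ncard :=
    Set.ncard_preimage_of_injective_subset_range e.injective (e.range_eq_univ ▸ Set.subset_univ v)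
  have ncard_compl := ncard_compl_inr_preimage_add_one inl_notMem
  have row_mem : (x ∘ Equiv.sumCongr (Equiv.refl _) e) ∘ Sum.inr ∈
      coordsIn (maximalIdeal R) (e ⁻¹' s) := mem_coordsIn.2 fun i hi => mem_coordsIn.1 hxs (e i) hi
  rw [← expect_det_bordered_preimage e,
    expect_det_bordered_of_isUnit_second hg hx (by simpa [he] using hj) row_mem]
  refine expectDet_eq_of_ncard_eq g ?_ ?_
  · rw [ncard_inr_preimage inl_notMem, ncard_preimage, ht]
  · rw [← Set.preimage_compl (f := e), ncard_preimage] at ncard_compl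
    omega

/-- The recursion splits on the first row outside `t`: either its diagonal entry is a unit, or only
an off-diagonal entry is, or all its entries lie in the maximal ideal. -/
theorem expectDet_eq_of_inl_notMem {t : Set (Unit ⊕ κ)} (ht : Sum.inl () ∉ t) {q : ℝ}
    (hq : q = (Nat.card (ResidueField R) : ℝ)⁻¹) {m : ℕ} (hm : tᶜ.ncard = m + 1)
    {ι : Type*} [Fintype ι] [DecidableEq ι] {u : Set ι} (hu : u.ncard = t.ncard)
    (huc : uᶜ.ncard = m - 1) :
    expectDet (maximalIdeal R) g t =
      (1 - q) * expectDet (maximalIdeal R) g (Sum.inr ⁻¹' t) +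
        q * (1 - q ^ m) * expectDet (maximalIdeal R) g u +
        q ^ (m + 1) * expectDet (maximalIdeal R) g (insert (Sum.inl ()) t) := by
  set 𝔪 := maximalIdeal R
  set T := insert (Sum.inl ()) t
  let φ (x : Unit ⊕ κ → R) : ℝ := 𝔼 D ∈ symmRowsIn 𝔪 (Sum.inr ⁻¹' t), g (bordered x D).det
  have expect_t : expectDet 𝔪 g t = 𝔼 x ∈ coordsIn 𝔪 t, φ x := by
    rw [expectDet, expect_symmRowsIn_unit_sum]
    simp only [ht, false_or, Set.ofPred_mem_eq, φ]
  have expect_T : expectDet 𝔪 g T = 𝔼 x ∈ coordsIn 𝔪 Set.univ, φ x := by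
    have preimage_T : Sum.inr ⁻¹' T = Sum.inr ⁻¹' t := by ext; simp [T]
    rw [expectDet, expect_symmRowsIn_unit_sum, preimage_T]
    simp only [T, Set.mem_insert, true_or, Set.ofPred_true, φ]
  have pivot_one (x) (hx : x ∈ coordsIn 𝔪 t) (hxT : x ∉ coordsIn 𝔪 T) :
      φ x = expectDet 𝔪 g (Sum.inr ⁻¹' t) := by
    refine expect_det_bordered_of_isUnit hg ?_ (mem_coordsIn.2 fun i hi => mem_coordsIn.1 hx _ hi)
    by_contra hx₀
    exact hxT (mem_coordsIn.2 (Set.forall_mem_insert.2 ⟨hx₀, mem_coordsIn.1 hx⟩))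
  have ncard_compl := ncard_compl_inr_preimage_add_one ht
  have pivot_two (x) (hx : x ∈ coordsIn 𝔪 T) (hxu : x ∉ coordsIn 𝔪 Set.univ) :
      φ x = expectDet 𝔪 g u := by
    have x_mem := Set.forall_mem_insert.1 (mem_coordsIn.1 hx)
    obtain ⟨j, hj⟩ : ∃ j, x (Sum.inr j) ∉ 𝔪 := by
      by_contra! h
      exact hxu (mem_coordsIn.2 fun i _ => Sum.rec (fun _ => x_mem.1) h i)
    exact expect_det_bordered_of_notMem hg x_mem.1 (mem_coordsIn.2 fun i hi => x_mem.2 _ hi) hj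
      (s := Sum.inr ⁻¹' t) (hu.trans (ncard_inr_preimage ht).symm) (by omega)
  rw [expect_t, expect_T, expect_coordsIn_eq ht hq hm pivot_one pivot_two]

end LocalRing

section CorankExpansion

open IsLocalRing

variable {R : Type*} [CommRing R] [IsLocalRing R] [Fintype R] {g : R → ℝ}

theorem ncard_range_inr (m k : ℕ) :
    (Set.range (Sum.inr : Fin k → Fin m ⊕ Fin k)).ncard = k := by
  rw [Set.ncard_range_of_injective Sum.inr_injective, Nat.card_fin]

theorem ncard_compl_range_inr (m k : ℕ) :
    (Set.range (Sum.inr : Fin k → Fin m ⊕ Fin k))ᶜ.ncard = m := by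
  rw [Set.compl_range_inr, Set.ncard_range_of_injective Sum.inl_injective, Nat.card_fin]

variable (g) in
/-- The mean of `g (det M)` over the symmetric matrices `M` of size `m + k` whose last `k` rows have
entries in the maximal ideal. -/
noncomputable def meanDet (m k : ℕ) : ℝ :=
  expectDet (maximalIdeal R) g (Set.range (Sum.inr : Fin k → Fin m ⊕ Fin k))

theorem expectDet_eq_meanDet {ι : Type*} [Fintype ι] [DecidableEq ι] {s : Set ι} {m k : ℕ}
    (hs : s.ncard = k) (hsc : sᶜ.ncard = m) : expectDet (maximalIdeal R) g s = meanDet g m k :=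
  expectDet_eq_of_ncard_eq g (hs.trans (ncard_range_inr m k).symm)
    (hsc.trans (ncard_compl_range_inr m k).symm)

variable (hg : ∀ u y, IsUnit u → g (u * y) = g y) {q : ℝ}
  (hq : q = (Nat.card (ResidueField R) : ℝ)⁻¹)
include hg hq

theorem meanDet_succ (m k : ℕ) :
    meanDet g (m + 1) k = (1 - q) * meanDet g m k + q * (1 - q ^ m) * meanDet g (m - 1) k +
      q ^ (m + 1) * meanDet g m (k + 1) := by
  let s := Set.range (Sum.inr : Fin k → Fin m ⊕ Fin k)
  let t : Set (Unit ⊕ (Fin m ⊕ Fin k)) := Sum.inr '' s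
  have inl_notMem : Sum.inl () ∉ t := by simp [t]
  have preimage_t : Sum.inr ⁻¹' t = s := Set.preimage_image_eq s Sum.inr_injective
  have ncard_t : t.ncard = k :=
    (Set.ncard_image_of_injective s Sum.inr_injective).trans (ncard_range_inr m k)
  have ncard_compl_t : tᶜ.ncard = m + 1 := by
    rw [← ncard_compl_inr_preimage_add_one inl_notMem, preimage_t, ncard_compl_range_inr]
  have ncard_insert : (insert (Sum.inl ()) t).ncard = k + 1 := by
    rw [Set.ncard_insert_of_notMem inl_notMem, ncard_t]
  have ncard_compl_insert : (insert (Sum.inl ()) t)ᶜ.ncard = m := by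
    rw [ncard_compl_insert inl_notMem, ncard_compl_t, Nat.add_sub_cancel]
  rw [← expectDet_eq_meanDet ncard_t ncard_compl_t,
    ← expectDet_eq_meanDet ncard_insert ncard_compl_insert]
  have recursion := expectDet_eq_of_inl_notMem hg inl_notMem hq ncard_compl_t
    ((ncard_range_inr (m - 1) k).trans ncard_t.symm) (ncard_compl_range_inr (m - 1) k)
  rwa [preimage_t] at recursion

theorem expectDet_empty_eq_sum_corankProb {n N : ℕ} (hN : n < N) :
    expectDet (maximalIdeal R) g (∅ : Set (Fin n)) = ∑ i ∈ Finset.range N,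
      corankProb q n i * expectDet (maximalIdeal R) g (Set.univ : Set (Fin i)) := by
  have ncard_univ (d : ℕ) : (Set.univ : Set (Fin d)).ncard = d := by
    rw [Set.ncard_univ, Nat.card_fin]
  have empty_eq : expectDet (maximalIdeal R) g (∅ : Set (Fin n)) = meanDet g n 0 :=
    expectDet_eq_meanDet (Set.ncard_empty _) (by rw [Set.compl_empty, ncard_univ])
  have univ_eq (i : ℕ) : expectDet (maximalIdeal R) g (Set.univ : Set (Fin i)) = meanDet g 0 i :=
    expectDet_eq_meanDet (ncard_univ i) (by rw [Set.compl_univ, Set.ncard_empty])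
  simp only [empty_eq, univ_eq, eq_sum_corankProb_of_recursion q (meanDet_succ hg hq) hN, zero_add]

end CorankExpansion

section SymmetricEntries

open Matrix
open scoped BigOperators

variable {R : Type*} [CommRing R] {ι : Type*}

variable (R ι) in
/-- The symmetric matrix with the entry `v s(i, j)` in the places `(i, j)` and `(j, i)`. -/
def symmOf : (Sym2 ι → R) →ₗ[R] Matrix ι ι R where
  toFun v := of fun i j => v s(i, j)
  map_add' _ _ := rfl
  map_smul' _ _ := rfl

theorem symmOf_injective : Function.Injective (symmOf R ι) := fun _ _ h =>
  funext (Sym2.ind fun i j => congrFun (congrFun h i) j)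

theorem isSymm_symmOf (v : Sym2 ι → R) : (symmOf R ι v).IsSymm :=
  IsSymm.ext fun _ _ => congrArg v Sym2.eq_swap

theorem exists_symmOf_eq {M : Matrix ι ι R} (hM : M.IsSymm) : ∃ v, symmOf R ι v = M :=
  ⟨Sym2.lift ⟨M, fun i j => (hM.apply i j).symm⟩, rfl⟩

theorem mapMatrix_symmOf {S : Type*} [CommRing S] [Fintype ι] [DecidableEq ι] (φ : R →+* S)
    (v : Sym2 ι → R) : φ.mapMatrix (symmOf R ι v) = symmOf S ι (φ ∘ v) := rfl

variable [Fintype R] [Fintype ι] [DecidableEq ι]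

theorem symmRowsIn_span_singleton_univ [DecidableEq R] (a : R) :
    symmRowsIn (Ideal.span {a}) Set.univ = Finset.univ.image (a • symmOf R ι) := by
  ext M
  simp only [mem_symmRowsIn, Set.mem_univ, true_imp_iff, Ideal.mem_span_singleton, Finset.mem_image,
    Finset.mem_univ, true_and, LinearMap.smul_apply]
  constructor
  · rintro ⟨M_symm, M_dvd⟩
    obtain ⟨v, rfl⟩ := exists_symmOf_eq M_symm
    choose w hw using Sym2.ind (f := fun z => a ∣ v z) M_dvd
    exact ⟨w, by rw [← map_smul, funext hw]; rfl⟩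
  · rintro ⟨v, rfl⟩
    exact ⟨(isSymm_symmOf v).smul a, fun i j => dvd_mul_right a _⟩

theorem symmRowsIn_empty [DecidableEq R] (I : Ideal R) :
    symmRowsIn I (∅ : Set ι) = Finset.univ.image (symmOf R ι) := by
  ext M
  simp only [mem_symmRowsIn, Set.mem_empty_iff_false, false_imp_iff, implies_true, and_true,
    Finset.mem_image, Finset.mem_univ, true_and]
  exact ⟨exists_symmOf_eq, fun ⟨v, hv⟩ => hv ▸ isSymm_symmOf v⟩

theorem expectDet_span_singleton_univ (a : R) (g : R → ℝ) :
    expectDet (Ideal.span {a}) g (Set.univ : Set ι) =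
      𝔼 v, g (a ^ Fintype.card ι * (symmOf R ι v).det) := by
  classical
  rw [expectDet, symmRowsIn_span_singleton_univ]
  refine (expect_image_addMonoidHom (a • symmOf R ι).toAddMonoidHom fun M => g M.det).trans ?_
  refine Finset.expect_congr rfl fun v _ => ?_
  rw [← det_smul]
  rfl

theorem expectDet_empty (I : Ideal R) (g : R → ℝ) :
    expectDet I g (∅ : Set ι) = 𝔼 v, g (symmOf R ι v).det := by
  classical
  rw [expectDet, symmRowsIn_empty]
  exact expect_image_addMonoidHom (symmOf R ι).toAddMonoidHom fun M => g M.det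

theorem card_symmRowsIn_empty (I : Ideal R) (n : ℕ) :
    (symmRowsIn I (∅ : Set (Fin n))).card = Fintype.card R ^ (n * (n + 1) / 2) := by
  classical
  rw [symmRowsIn_empty, Finset.card_image_of_injective _ symmOf_injective, Finset.card_univ,
    Fintype.card_fun, Sym2.card, Fintype.card_fin, Nat.choose_two_right, Nat.add_sub_cancel,
    mul_comm n]

end SymmetricEntries

section ZModPrimePow

open Matrix IsLocalRing
open scoped BigOperators

theorem Psym_eq_expectDet (n : ℕ) {m : ℕ} [NeZero m] (I : Ideal (ZMod m)) :
    Psym n m = expectDet I (Set.indicator {0}ᶜ 1) (∅ : Set (Fin n)) := by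
  classical
  have Nsym_eq : Nsym n m = ((symmRowsIn I (∅ : Set (Fin n))).filter fun M => M.det ≠ 0).card := by
    rw [Nsym, Nat.card_eq_fintype_card, Fintype.card_subtype]
    congr 1
    ext M
    simp [mem_symmRowsIn]
  rw [Psym, Nsym_eq, expectDet, Finset.expect_eq_sum_div_card, card_symmRowsIn_empty, ZMod.card,
    Nat.cast_pow, Finset.card_filter, Nat.cast_sum]
  simp only [Set.indicator_apply, Set.mem_compl_iff, Set.mem_singleton_iff, Nat.cast_ite,
    Nat.cast_one, Nat.cast_zero, Pi.one_apply, ne_eq]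

theorem Psym_one_right (n : ℕ) : Psym n 1 = 0 := by
  have : IsEmpty {A : Matrix (Fin n) (Fin n) (ZMod 1) // A.IsSymm ∧ A.det ≠ 0} :=
    ⟨fun A => A.2.2 (Subsingleton.elim _ _)⟩
  rw [Psym, Nsym, Nat.card_of_isEmpty, Nat.cast_zero, zero_div]

theorem natCast_pow_mul_eq_zero_iff {p : ℕ} [NeZero p] {μ : ℕ} (k : ℕ) (y : ZMod (p ^ μ)) :
    (p : ZMod (p ^ μ)) ^ k * y = 0 ↔
      ZMod.castHom (pow_dvd_pow p (Nat.sub_le μ k)) (ZMod (p ^ (μ - k))) y = 0 := by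
  obtain ⟨n, rfl⟩ := ZMod.natCast_zmod_surjective y
  rw [map_natCast, ZMod.natCast_eq_zero_iff, ← Nat.cast_pow, ← Nat.cast_mul,
    ZMod.natCast_eq_zero_iff]
  rcases le_total k μ with h | h
  · conv_lhs => rw [← Nat.add_sub_cancel' h, pow_add]
    exact Nat.mul_dvd_mul_iff_left (pow_pos (NeZero.pos p) k)
  · rw [Nat.sub_eq_zero_of_le h, pow_zero]
    exact iff_of_true ((pow_dvd_pow p h).mul_right n) (one_dvd n)

theorem expectDet_span_natCast_univ (p : ℕ) [NeZero p] (μ k : ℕ) :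
    expectDet (Ideal.span {(p : ZMod (p ^ μ))}) (Set.indicator {0}ᶜ 1) (Set.univ : Set (Fin k)) =
      Psym k (p ^ (μ - k)) := by
  let φ := ZMod.castHom (pow_dvd_pow p (Nat.sub_le μ k)) (ZMod (p ^ (μ - k)))
  have φ_surjective : Function.Surjective φ := ZMod.castHom_surjective _
  have indicator_eq (y : ZMod (p ^ μ)) :
      Set.indicator {0}ᶜ (1 : ZMod (p ^ μ) → ℝ) ((p : ZMod (p ^ μ)) ^ k * y) =
        Set.indicator {0}ᶜ 1 (φ y) := by
    simp only [Set.indicator_apply, Set.mem_compl_iff, Set.mem_singleton_iff,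
      natCast_pow_mul_eq_zero_iff, Pi.one_apply, φ]
  have image_eq : Finset.univ.image (φ.toAddMonoidHom.compLeft (Sym2 (Fin k))) = Finset.univ :=
    Finset.image_univ_of_surjective φ_surjective.comp_left
  rw [expectDet_span_singleton_univ, Fintype.card_fin, Psym_eq_expectDet k ⊥, expectDet_empty,
    ← image_eq, expect_image_addMonoidHom]
  refine Finset.expect_congr rfl fun v _ => ?_
  rw [indicator_eq, RingHom.map_det, mapMatrix_symmOf]
  rfl

section PrimePower

variable {p : ℕ} [Fact p.Prime] {μ : ℕ}

theorem maximalIdeal_zmod_prime_pow [IsLocalRing (ZMod (p ^ μ))] :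
    maximalIdeal (ZMod (p ^ μ)) = Ideal.span {(p : ZMod (p ^ μ))} := by
  rw [← map_maximalIdeal_of_surjective (PadicInt.toZModPow (p := p) μ)
    (ZMod.ringHom_surjective _), PadicInt.maximalIdeal_eq_span_p, Ideal.map_span,
    Set.image_singleton, map_natCast]

variable (hμ : μ ≠ 0)
include hμ

theorem nontrivial_zmod_prime_pow : Nontrivial (ZMod (p ^ μ)) :=
  ZMod.nontrivial_iff.2 (Nat.one_lt_pow hμ (Fact.out : p.Prime).one_lt).ne'

theorem isLocalRing_zmod_prime_pow : IsLocalRing (ZMod (p ^ μ)) :=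
  have := nontrivial_zmod_prime_pow (p := p) hμ
  .of_surjective' (PadicInt.toZModPow (p := p) μ) (ZMod.ringHom_surjective _)

theorem card_residueField_zmod_prime_pow [IsLocalRing (ZMod (p ^ μ))] :
    Nat.card (ResidueField (ZMod (p ^ μ))) = p := by
  let φ := ZMod.castHom (dvd_pow_self p hμ) (ZMod p)
  have φ_surjective : Function.Surjective φ := ZMod.castHom_surjective _
  have ker_eq : RingHom.ker φ = maximalIdeal (ZMod (p ^ μ)) :=
    eq_maximalIdeal (RingHom.ker_isMaximal_of_surjective φ φ_surjective)
  rw [ResidueField, ← ker_eq, Nat.card_congr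
    (RingHom.quotientKerEquivOfSurjective φ_surjective).toEquiv, Nat.card_zmod]

end PrimePower

theorem Psym_eq_sum_corankProb {p : ℕ} (hp : p.Prime) (n : ℕ) (μ : ℕ) {N : ℕ} (hN : n < N) :
    Psym n (p ^ μ) =
      ∑ i ∈ Finset.range N, corankProb (1 / p : ℝ) n i * Psym i (p ^ (μ - i)) := by
  rcases eq_or_ne μ 0 with rfl | hμ
  · simp only [Nat.zero_sub, pow_zero, Psym_one_right, mul_zero, Finset.sum_const_zero]
  have : Fact p.Prime := ⟨hp⟩
  have := isLocalRing_zmod_prime_pow (p := p) hμ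
  have indicator_mul (u y : ZMod (p ^ μ)) (hu : IsUnit u) :
      Set.indicator {0}ᶜ (1 : ZMod (p ^ μ) → ℝ) (u * y) = Set.indicator {0}ᶜ 1 y := by
    simp only [Set.indicator_apply, Set.mem_compl_iff, Set.mem_singleton_iff,
      hu.mul_right_eq_zero, Pi.one_apply]
  have card_residueField : (1 / p : ℝ) = (Nat.card (ResidueField (ZMod (p ^ μ))) : ℝ)⁻¹ := by
    rw [card_residueField_zmod_prime_pow hμ, one_div]
  rw [Psym_eq_expectDet n (maximalIdeal (ZMod (p ^ μ))),
    expectDet_empty_eq_sum_corankProb indicator_mul card_residueField hN]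
  simp only [maximalIdeal_zmod_prime_pow, expectDet_span_natCast_univ]

end ZModPrimePow

theorem Psym_even_from_odd (p : ℕ) (hp : p.Prime) (q : ℝ) (hq : q = 1 / p)
    (μ : ℕ) (hμ : 1 ≤ μ) (n : ℕ) (hn : 1 ≤ n) (hodd : Odd n) :
    (1 - q ^ n) * Psym (n - 1) (p ^ μ) =
      Psym n (p ^ μ) - q ^ n * Psym n (p ^ (μ - 1)) := by
  obtain ⟨h, rfl⟩ := hodd
  subst hq
  exact one_sub_pow_mul_even_of_corank_expansion _ (Z := fun n ν => Psym n (p ^ ν))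
    (fun n => by rw [pow_zero, Psym_one_right])
    (fun n ν N hN => Psym_eq_sum_corankProb hp n ν hN) h μ
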